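/- The series ∑_{n=0}^∞ [(1/2)_n (1/6)_n (5/6)_n / ((1)_n)^3] · ((74n + 7)/(2n + 1)) · (27/64)^n converges and has sum 8. -/

import Mathlib

open Real

/-- `poch a n` is the rising factorial (Pochhammer symbol) `(a)ₙ = a(a+1)⋯(a+n−1)`. -/
noncomputable def poch (a : ℝ) (n : ℕ) : ℝ := (ascPochhammer ℝ n).eval a

/-!
The proof is by the Wilf–Zeilberger method. The summand is the value at `k = 0` of a function
`F n k`, and there is a mate `G n k` with `F n (k + 1) - F n k = G (n + 1) k - G n k` which
vanishes for `n = 0` and as `n → ∞`. Telescoping over `n` shows that `∑ₙ F n k` does not depend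
on `k`. As `k → ∞` all terms with `n ≥ 1` tend to `0` while `F 0 k = 8 - 1 / (k + 1)²`, and the
geometric bound `37 (27/64)ⁿ`, uniform in `k`, lets the limit pass through the sum.
-/

open Filter Finset
open scoped Nat Topology

/-- A Wilf–Zeilberger pair: the forward difference of `F` in its second argument is the forward
difference of its mate `G` in the first argument. -/
def IsWZPair {E : Type*} [AddCommGroup E] (F G : ℕ → ℕ → E) : Prop :=
  ∀ n k, F n (k + 1) - F n k = G (n + 1) k - G n k

namespace IsWZPair

theorem sum_range_sub {E : Type*} [AddCommGroup E] {F G : ℕ → ℕ → E} (h : IsWZPair F G)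
    (k N : ℕ) : ∑ n ∈ range N, (F n (k + 1) - F n k) = G N k - G 0 k := by
  simp only [h _ k, Finset.sum_range_sub (G · k)]

section Topological

variable {E : Type*} [AddCommGroup E] [TopologicalSpace E] [IsTopologicalAddGroup E] [T2Space E]
  {F G : ℕ → ℕ → E}

theorem tsum_succ (h : IsWZPair F G) (hF : ∀ k, Summable (F · k))
    (hG : ∀ k, Tendsto (G · k) atTop (𝓝 (G 0 k))) (k : ℕ) :
    ∑' n, F n (k + 1) = ∑' n, F n k := by
  have hdiff : Tendsto (fun N ↦ ∑ n ∈ range N, (F n (k + 1) - F n k)) atTop (𝓝 0) := by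
    simpa only [h.sum_range_sub, sub_self] using (hG k).sub_const (G 0 k)
  have hsum := ((hF (k + 1)).hasSum.sub (hF k).hasSum).tendsto_sum_nat
  exact sub_eq_zero.mp (tendsto_nhds_unique hsum hdiff)

theorem tsum_eq_tsum_zero (h : IsWZPair F G) (hF : ∀ k, Summable (F · k))
    (hG : ∀ k, Tendsto (G · k) atTop (𝓝 (G 0 k))) (k : ℕ) :
    ∑' n, F n k = ∑' n, F n 0 := by
  induction k with
  | zero => rfl
  | succ k ih => rw [h.tsum_succ hF hG, ih]

end Topological

theorem hasSum_zero_of_dominated {E : Type*} [NormedAddCommGroup E] [CompleteSpace E]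
    {F G : ℕ → ℕ → E} {L : ℕ → E} {bound : ℕ → ℝ} (h : IsWZPair F G) (hbound : Summable bound)
    (hF : ∀ n k, ‖F n k‖ ≤ bound n) (hG : ∀ k, Tendsto (G · k) atTop (𝓝 (G 0 k)))
    (hL : ∀ n, Tendsto (F n) atTop (𝓝 (L n))) : HasSum (F · 0) (∑' n, L n) := by
  have hsummable (k : ℕ) : Summable (F · k) := hbound.of_norm_bounded (hF · k)
  have hlim : Tendsto (fun k ↦ ∑' n, F n k) atTop (𝓝 (∑' n, L n)) :=
    tendsto_tsum_of_dominated_convergence hbound hL (.of_forall fun k n ↦ hF n k)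
  simp only [h.tsum_eq_tsum_zero hsummable hG] at hlim
  exact tendsto_nhds_unique tendsto_const_nhds hlim ▸ (hsummable 0).hasSum

end IsWZPair

theorem poch_zero (a : ℝ) : poch a 0 = 1 := by
  simp [poch]

theorem poch_succ (a : ℝ) (n : ℕ) : poch a (n + 1) = poch a n * (a + n) :=
  ascPochhammer_succ_eval n a

theorem poch_pos {a : ℝ} (ha : 0 < a) (n : ℕ) : 0 < poch a n :=
  ascPochhammer_pos n a ha

theorem poch_one_left (n : ℕ) : poch 1 n = n ! :=
  ascPochhammer_eval_one ℝ n

theorem poch_eq_prod_range (a : ℝ) (n : ℕ) : poch a n = ∏ j ∈ range n, (a + j) := by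
  induction n with
  | zero => simp [poch_zero]
  | succ n ih => rw [poch_succ, ih, prod_range_succ]

theorem poch_mul_mul {m : ℕ} (hm : m ≠ 0) (a : ℝ) (n : ℕ) :
    poch (m * a) (m * n) = m ^ (m * n) * ∏ j ∈ range m, poch (a + j / m) n := by
  induction n with
  | zero => simp [poch_zero]
  | succ n ih =>
    have hblock : ∏ j ∈ range m, (m * a + (m * n + j : ℕ)) =
        (m : ℝ) ^ m * ∏ j ∈ range m, (a + j / m + n) := by
      rw [← card_range m, ← prod_const, card_range, ← prod_mul_distrib]
      refine prod_congr rfl fun j _ ↦ ?_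
      push_cast
      field_simp
      ring
    rw [mul_add_one, poch_eq_prod_range, prod_range_add, ← poch_eq_prod_range, ih, hblock]
    simp only [poch_succ, prod_mul_distrib]
    ring

theorem factorial_two_mul_eq_poch (n : ℕ) :
    ((2 * n)! : ℝ) = 4 ^ n * poch (1/2) n * poch 1 n := by
  calc ((2 * n)! : ℝ) = poch ((2 : ℕ) * (1/2)) (2 * n) := by norm_num [poch_one_left]
    _ = (2 : ℕ) ^ (2 * n) * ∏ j ∈ range 2, poch (1/2 + j / (2 : ℕ)) n :=
      poch_mul_mul two_ne_zero _ n
    _ = 4 ^ n * poch (1/2) n * poch 1 n := by norm_num [prod_range_succ, pow_mul, mul_assoc]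

theorem poch_half_three_mul (n : ℕ) :
    poch (1/2) (3 * n) = 27 ^ n * poch (1/6) n * poch (1/2) n * poch (5/6) n := by
  calc poch (1/2) (3 * n) = poch ((3 : ℕ) * (1/6)) (3 * n) := by norm_num
    _ = (3 : ℕ) ^ (3 * n) * ∏ j ∈ range 3, poch (1/6 + j / (3 : ℕ)) n :=
      poch_mul_mul three_ne_zero _ n
    _ = 27 ^ n * poch (1/6) n * poch (1/2) n * poch (5/6) n := by
      norm_num [prod_range_succ, pow_mul, mul_assoc]

/-- The hypergeometric term common to both members of the Wilf–Zeilberger pair. -/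
noncomputable def wzKernel (n k : ℕ) : ℝ :=
  poch (1/2) (3 * n + 2 * k) * poch (1/2) n ^ 4 * (k ! : ℝ) ^ 2 /
    (((2 * n + k)! : ℝ) ^ 2 * (2 * n)! * poch (1/2) (n + 2 * k))

/-- The ratio `wzKernel (n + 1) k / wzKernel n k`, as a rational function of `x = n`, `y = k`. -/
noncomputable def wzRatioFst (x y : ℝ) : ℝ :=
  (6 * x + 4 * y + 1) * (6 * x + 4 * y + 3) * (6 * x + 4 * y + 5) * (2 * x + 1) ^ 3 /
    (128 * (x + 1) * (2 * x + y + 1) ^ 2 * (2 * x + y + 2) ^ 2 * (2 * x + 4 * y + 1))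

/-- The ratio `wzKernel n (k + 1) / wzKernel n k`, as a rational function of `x = n`, `y = k`. -/
noncomputable def wzRatioSnd (x y : ℝ) : ℝ :=
  (6 * x + 4 * y + 1) * (6 * x + 4 * y + 3) * (y + 1) ^ 2 /
    ((2 * x + y + 1) ^ 2 * (2 * x + 4 * y + 1) * (2 * x + 4 * y + 3))

/-- The rational cofactor of `wzKernel` in the first member of the Wilf–Zeilberger pair. -/
noncomputable def wzFactor (x y : ℝ) : ℝ :=
  (296 * x ^ 3 + 432 * x ^ 2 * y + 208 * x * y ^ 2 + 32 * y ^ 3 +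
      324 * x ^ 2 + 304 * x * y + 72 * y ^ 2 + 102 * x + 44 * y + 7) /
    ((2 * x + 4 * y + 1) * (2 * x + y + 1) ^ 2)

/-- The rational cofactor of `wzKernel` in the second member of the Wilf–Zeilberger pair. -/
noncomputable def wzMateFactor (x y : ℝ) : ℝ :=
  128 * x * (2 * x + 2 * y + 1) / ((2 * x + 4 * y + 1) * (2 * x + 4 * y + 3))

section RationalFunctions

variable {x y : ℝ}

theorem wzRatioFst_nonneg (hx : 0 ≤ x) (hy : 0 ≤ y) : 0 ≤ wzRatioFst x y := by
  unfold wzRatioFst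
  positivity

theorem wzRatioFst_le (hx : 0 ≤ x) (hy : 0 ≤ y) : wzRatioFst x y ≤ 27 / 64 := by
  unfold wzRatioFst
  rw [div_le_div_iff₀ (by positivity) (by positivity), ← sub_nonneg]
  -- The difference of the cross products is a polynomial with nonnegative coefficients.
  ring_nf
  positivity

theorem wzRatioFst_le_div (hx : 0 ≤ x) (hy : 0 ≤ y) :
    wzRatioFst x y ≤ (2 * x + 1) ^ 2 / (y + 1) := by
  unfold wzRatioFst
  rw [div_le_div_iff₀ (by positivity) (by positivity), ← sub_nonneg]
  ring_nf
  positivity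

theorem wzFactor_nonneg (hx : 0 ≤ x) (hy : 0 ≤ y) : 0 ≤ wzFactor x y := by
  unfold wzFactor
  positivity

theorem wzFactor_le (hx : 0 ≤ x) (hy : 0 ≤ y) : wzFactor x y ≤ 37 := by
  unfold wzFactor
  rw [div_le_iff₀ (by positivity), ← sub_nonneg]
  ring_nf
  positivity

theorem wzFactor_zero_left (hy : 0 ≤ y) : wzFactor 0 y = 8 - 1 / (y + 1) ^ 2 := by
  unfold wzFactor
  have : 2 * 0 + 4 * y + 1 ≠ 0 := by positivity
  field_simp
  ring

theorem wzFactor_zero_right (hx : 0 ≤ x) : wzFactor x 0 = (74 * x + 7) / (2 * x + 1) := by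
  unfold wzFactor
  rw [div_eq_div_iff (by positivity) (by positivity)]
  ring

theorem wzMateFactor_nonneg (hx : 0 ≤ x) (hy : 0 ≤ y) : 0 ≤ wzMateFactor x y := by
  unfold wzMateFactor
  positivity

theorem wzMateFactor_le (hx : 0 ≤ x) (hy : 0 ≤ y) : wzMateFactor x y ≤ 64 := by
  unfold wzMateFactor
  rw [div_le_iff₀ (by positivity), ← sub_nonneg]
  ring_nf
  positivity

-- The Wilf–Zeilberger equation divided by `wzKernel n k`.
theorem wzRatioSnd_mul_wzFactor_sub (hx : 0 ≤ x) (hy : 0 ≤ y) :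
    wzRatioSnd x y * wzFactor x (y + 1) - wzFactor x y =
      wzRatioFst x y * wzMateFactor (x + 1) y - wzMateFactor x y := by
  unfold wzRatioSnd wzFactor wzRatioFst wzMateFactor
  rw [← mul_div_mul_comm, ← mul_div_mul_comm, div_sub_div _ _ (by positivity) (by positivity),
    div_sub_div _ _ (by positivity) (by positivity),
    div_eq_div_iff (by positivity) (by positivity)]
  ring

end RationalFunctions

theorem wzKernel_pos (n k : ℕ) : 0 < wzKernel n k := by
  have h₁ := poch_pos one_half_pos (3 * n + 2 * k)
  have h₂ := poch_pos one_half_pos n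
  have h₃ := poch_pos one_half_pos (n + 2 * k)
  unfold wzKernel
  positivity

theorem wzKernel_succ_left (n k : ℕ) :
    wzKernel (n + 1) k = wzKernel n k * wzRatioFst n k := by
  have hpoch := (poch_pos one_half_pos (n + 2 * k)).ne'
  unfold wzKernel wzRatioFst
  rw [show 3 * (n + 1) + 2 * k = 3 * n + 2 * k + 1 + 1 + 1 by ring,
    show n + 1 + 2 * k = n + 2 * k + 1 by ring,
    show 2 * (n + 1) + k = 2 * n + k + 1 + 1 by ring, show 2 * (n + 1) = 2 * n + 1 + 1 by ring]
  simp only [poch_succ, Nat.factorial_succ]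
  push_cast
  field_simp
  ring

theorem wzKernel_succ_right (n k : ℕ) :
    wzKernel n (k + 1) = wzKernel n k * wzRatioSnd n k := by
  have hpoch := (poch_pos one_half_pos (n + 2 * k)).ne'
  unfold wzKernel wzRatioSnd
  rw [show 3 * n + 2 * (k + 1) = 3 * n + 2 * k + 1 + 1 by ring,
    show n + 2 * (k + 1) = n + 2 * k + 1 + 1 by ring, ← add_assoc]
  simp only [poch_succ, Nat.factorial_succ]
  push_cast
  field_simp
  ring

theorem wzKernel_zero_left (k : ℕ) : wzKernel 0 k = 1 := by
  have hpoch := (poch_pos one_half_pos (2 * k)).ne'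
  simp only [wzKernel, mul_zero, zero_add, poch_zero, Nat.factorial_zero]
  field_simp
  norm_num

theorem wzKernel_zero_right (n : ℕ) :
    wzKernel n 0 = poch (1/2) n * poch (1/6) n * poch (5/6) n / poch 1 n ^ 3 * (27/64) ^ n := by
  have h₁ := (poch_pos one_pos n).ne'
  have h₂ := (poch_pos one_half_pos n).ne'
  have h64 : (64 : ℝ) ^ n = (4 ^ n) ^ 3 := by rw [← pow_mul, mul_comm, pow_mul]; norm_num
  simp only [wzKernel, mul_zero, add_zero, Nat.factorial_zero, factorial_two_mul_eq_poch,
    poch_half_three_mul, div_pow, h64]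
  field_simp
  norm_num

theorem wzKernel_le_pow (n k : ℕ) : wzKernel n k ≤ (27/64) ^ n := by
  induction n with
  | zero => simp [wzKernel_zero_left]
  | succ n ih =>
    rw [wzKernel_succ_left, pow_succ]
    gcongr
    · exact wzRatioFst_nonneg n.cast_nonneg k.cast_nonneg
    · exact wzRatioFst_le n.cast_nonneg k.cast_nonneg

theorem tendsto_wzKernel_succ (n : ℕ) : Tendsto (wzKernel (n + 1)) atTop (𝓝 0) := by
  have hle (k : ℕ) : wzKernel (n + 1) k ≤ (2 * n + 1) ^ 2 * (1 / ((k : ℝ) + 1)) := by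
    have hkernel : wzKernel n k ≤ 1 :=
      (wzKernel_le_pow n k).trans (pow_le_one₀ (by norm_num) (by norm_num))
    have hratio := wzRatioFst_nonneg n.cast_nonneg k.cast_nonneg
    calc wzKernel (n + 1) k = wzKernel n k * wzRatioFst n k := wzKernel_succ_left n k
      _ ≤ wzRatioFst n k := mul_le_of_le_one_left hratio hkernel
      _ ≤ (2 * n + 1) ^ 2 / (k + 1) := wzRatioFst_le_div n.cast_nonneg k.cast_nonneg
      _ = (2 * n + 1) ^ 2 * (1 / (k + 1)) := by ring
  refine squeeze_zero (fun k ↦ (wzKernel_pos _ k).le) hle ?_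
  simpa using (tendsto_one_div_add_atTop_nhds_zero_nat (𝕜 := ℝ)).const_mul ((2 * (n : ℝ) + 1) ^ 2)

/-- The first member of the Wilf–Zeilberger pair; `wzTerm n 0` is the summand of the series. -/
noncomputable def wzTerm (n k : ℕ) : ℝ := wzKernel n k * wzFactor n k

/-- The second member of the Wilf–Zeilberger pair, the mate of `wzTerm`. -/
noncomputable def wzMate (n k : ℕ) : ℝ := wzKernel n k * wzMateFactor n k

theorem isWZPair_wzTerm_wzMate : IsWZPair wzTerm wzMate := by
  intro n k
  have h := wzRatioSnd_mul_wzFactor_sub (x := n) (y := k) n.cast_nonneg k.cast_nonneg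
  simp only [wzTerm, wzMate, wzKernel_succ_left, wzKernel_succ_right, Nat.cast_succ]
  linear_combination wzKernel n k * h

theorem wzTerm_nonneg (n k : ℕ) : 0 ≤ wzTerm n k :=
  mul_nonneg (wzKernel_pos n k).le (wzFactor_nonneg n.cast_nonneg k.cast_nonneg)

theorem wzTerm_le (n k : ℕ) : wzTerm n k ≤ wzKernel n k * 37 :=
  mul_le_mul_of_nonneg_left (wzFactor_le n.cast_nonneg k.cast_nonneg) (wzKernel_pos n k).le

theorem norm_wzTerm_le (n k : ℕ) : ‖wzTerm n k‖ ≤ (27/64) ^ n * 37 := by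
  rw [norm_of_nonneg (wzTerm_nonneg n k)]
  exact (wzTerm_le n k).trans (by gcongr; exact wzKernel_le_pow n k)

theorem tendsto_wzTerm (n : ℕ) :
    Tendsto (wzTerm n) atTop (𝓝 ((Pi.single 0 8 : ℕ → ℝ) n)) := by
  cases n with
  | zero =>
    have hterm (k : ℕ) : wzTerm 0 k = 8 - (1 / ((k : ℝ) + 1)) ^ 2 := by
      simp [wzTerm, wzKernel_zero_left, wzFactor_zero_left]
    simpa [funext hterm] using
      ((tendsto_one_div_add_atTop_nhds_zero_nat (𝕜 := ℝ)).pow 2).const_sub 8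
  | succ n =>
    simpa using squeeze_zero (wzTerm_nonneg (n + 1)) (wzTerm_le (n + 1))
      (by simpa using (tendsto_wzKernel_succ n).mul_const 37)

theorem wzMate_zero_left (k : ℕ) : wzMate 0 k = 0 := by
  simp [wzMate, wzMateFactor]

theorem tendsto_wzMate (k : ℕ) : Tendsto (wzMate · k) atTop (𝓝 0) := by
  have hnonneg (n : ℕ) : 0 ≤ wzMateFactor n k := wzMateFactor_nonneg n.cast_nonneg k.cast_nonneg
  have hle (n : ℕ) : wzMate n k ≤ (27/64) ^ n * 64 :=
    mul_le_mul (wzKernel_le_pow n k) (wzMateFactor_le n.cast_nonneg k.cast_nonneg) (hnonneg n)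
      (by positivity)
  refine squeeze_zero (fun n ↦ mul_nonneg (wzKernel_pos n k).le (hnonneg n)) hle ?_
  simpa using (tendsto_pow_atTop_nhds_zero_of_lt_one (r := (27/64 : ℝ)) (by norm_num)
    (by norm_num)).mul_const 64

theorem wzTerm_zero_right (n : ℕ) :
    wzTerm n 0 = poch (1/2) n * poch (1/6) n * poch (5/6) n / (poch 1 n)^3 *
      ((74 * (n : ℝ) + 7) / (2 * n + 1)) * (27/64)^n := by
  rw [wzTerm, wzKernel_zero_right, Nat.cast_zero, wzFactor_zero_right n.cast_nonneg]
  ring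

theorem chu_zhang_series_74n_7 :
    HasSum (fun n : ℕ =>
      poch (1/2) n * poch (1/6) n * poch (5/6) n / (poch 1 n)^3 *
        ((74 * (n : ℝ) + 7) / (2 * n + 1)) * (27/64)^n)
      8 := by
  have hbound : Summable fun n : ℕ ↦ (27/64 : ℝ) ^ n * 37 :=
    (summable_geometric_of_lt_one (by norm_num) (by norm_num)).mul_right 37
  have hmate (k : ℕ) : Tendsto (wzMate · k) atTop (𝓝 (wzMate 0 k)) := by
    simpa only [wzMate_zero_left] using tendsto_wzMate k
  have hsum := isWZPair_wzTerm_wzMate.hasSum_zero_of_dominated hbound norm_wzTerm_le hmate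
    tendsto_wzTerm
  simpa only [tsum_pi_single, wzTerm_zero_right] using hsum
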